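/- Let A be a small abelian category and B an abelian category with all small limits. A functor E : A ⥤ B that preserves finite products is a sheaf for the single-epi topology on Aᵒᵖ if and only if E preserves finite limits (is left exact). Consequently, the full subcategory of Fun(A, B) consisting of finite-product-preserving sheaves coincides with the full subcategory of left exact functors A ⥤ B. -/

import Mathlib

/-!
STATEMENT 19: For a small abelian category `A` and an abelian category `B` with all
small limits, a finite-product-preserving functor `E : A ⥤ B` is a sheaf for the
single-epi topology on `Aᵒᵖ` if and only if it is left exact; consequently the
finite-product-preserving sheaves are exactly the left exact functors.
-/

open CategoryTheory CategoryTheory.Limits Opposite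

universe w v u

/-- A covering class on a category: a class of morphisms containing the identities,
closed under composition, such that morphisms of the class admit pullbacks along
arbitrary morphisms, and such that any pullback of a morphism of the class is again
in the class. -/
structure IsCoveringClass {I : Type u} [Category.{v} I] (F : MorphismProperty I) : Prop where
  id_mem : ∀ X : I, F (𝟙 X)
  comp_mem : ∀ {X Y Z : I} (f : X ⟶ Y) (g : Y ⟶ Z), F f → F g → F (f ≫ g)
  pullback_exists : ∀ {X Y Z : I} (f : X ⟶ Z) (g : Y ⟶ Z), F f → HasPullback f g
  pullback_mem : ∀ {P X Y Z : I} (fst : P ⟶ X) (snd : P ⟶ Y) (f : X ⟶ Z) (g : Y ⟶ Z),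
      F f → IsPullback fst snd f g → F snd

/-- The Grothendieck topology generated by a covering class: a sieve covers iff it
contains a morphism of the class. -/
def fTopology {I : Type u} [Category.{v} I] (F : MorphismProperty I)
    (hF : IsCoveringClass F) : GrothendieckTopology I where
  sieves X := {S | ∃ (Y : I) (f : Y ⟶ X), F f ∧ S.arrows f}
  top_mem' X := ⟨X, 𝟙 X, hF.id_mem X, trivial⟩
  pullback_stable' := by
    intro X Y S g hS
    obtain ⟨Z, f, hf, hSf⟩ := hS
    haveI : HasPullback f g := hF.pullback_exists f g hf
    refine ⟨pullback f g, pullback.snd f g,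
      hF.pullback_mem (pullback.fst f g) (pullback.snd f g) f g hf
        (IsPullback.of_hasPullback f g), ?_⟩
    show S.arrows (pullback.snd f g ≫ g)
    rw [← pullback.condition]
    exact S.downward_closed hSf _
  transitive' := by
    intro X S hS R hR
    obtain ⟨Z, f, hf, hSf⟩ := hS
    obtain ⟨W, g, hg, hRg⟩ := hR hSf
    exact ⟨W, g ≫ f, hF.comp_mem g f hg hf, hRg⟩

/-- The class of morphisms of `Aᵒᵖ` corresponding to monomorphisms of `A`. -/
def monoClass (A : Type u) [Category.{v} A] : MorphismProperty Aᵒᵖ :=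
  fun _ _ f => Mono f.unop

theorem monoClass_isCoveringClass (A : Type u) [Category.{v} A] [Abelian A] :
    IsCoveringClass (monoClass A) where
  id_mem X := by
    show Mono (𝟙 X).unop
    rw [unop_id]
    infer_instance
  comp_mem f g hf hg := by
    show Mono (f ≫ g).unop
    rw [unop_comp]
    exact @mono_comp _ _ _ _ _ _ hg _ hf
  pullback_exists f g _ := inferInstance
  pullback_mem fst snd f g hf sq := by
    haveI : Mono f.unop := hf
    have h := sq.unop
    show Mono snd.unop
    have h1 : snd.unop ≫ h.isoPushout.hom = pushout.inl g.unop f.unop :=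
      h.inl_isoPushout_hom
    have : snd.unop = pushout.inl g.unop f.unop ≫ h.isoPushout.inv := by
      rw [← h1]; simp
    rw [this]
    haveI : Mono (pushout.inl g.unop f.unop) :=
      CategoryTheory.Abelian.mono_pushout_of_mono_g g.unop f.unop
    exact mono_comp _ _

/-- The single-epi topology on `Aᵒᵖ` for a small abelian category `A`: a sieve on `X`
is covering iff it contains a morphism of `Aᵒᵖ` corresponding to a monomorphism
`X → Y` of `A`. -/
def singleEpiTopology (A : Type u) [SmallCategory A] [Abelian A] :
    GrothendieckTopology Aᵒᵖ :=
  fTopology (monoClass A) (monoClass_isCoveringClass A)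

theorem aux_sheaf_of_lex {A : Type u} [SmallCategory A] [Abelian A]
    {B : Type w} [Category.{v} B] [Abelian B]
    (E : A ⥤ B) (hE : PreservesFiniteLimits E) :
    Presheaf.IsSheaf (singleEpiTopology A) (unopUnop A ⋙ E) := by
  haveI : E.Additive := E.additive_of_preserves_binary_products
  intro T X S hS x hx
  obtain ⟨Y, f, hf, hSf⟩ := hS
  haveI : Mono f.unop := hf
  have compat : ∀ {Z : Aᵒᵖ} (g : Z ⟶ X) (hg : S.arrows g) {P : A} (p : Y.unop ⟶ P)
      (q : Z.unop ⟶ P), f.unop ≫ p = g.unop ≫ q →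
      (show T ⟶ E.obj Y.unop from x f hSf) ≫ E.map p =
        (show T ⟶ E.obj Z.unop from x g hg) ≫ E.map q := by
    intro Z g hg P p q h
    exact hx p.op q.op hSf hg (Quiver.Hom.unop_inj h)
  have h0 : (show T ⟶ E.obj Y.unop from x f hSf) ≫ E.map (cokernel.π f.unop) = 0 := by
    have := compat f hSf (cokernel.π f.unop) 0 (by simp)
    rw [this]; simp
  have hk : IsLimit (KernelFork.ofι f.unop (cokernel.condition f.unop)) :=
    Abelian.monoIsKernelOfCokernel (CokernelCofork.ofπ (cokernel.π f.unop) (cokernel.condition f.unop)) (cokernelIsCokernel f.unop)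
  have hk' := isLimitForkMapOfIsLimit' E _ hk
  obtain ⟨s, hs⟩ := KernelFork.IsLimit.lift' hk' (show T ⟶ E.obj Y.unop from x f hSf) h0
  replace hs : s ≫ E.map f.unop = (show T ⟶ E.obj Y.unop from x f hSf) := hs
  refine ⟨s, ?_, ?_⟩
  · intro Z g hg
    have e := compat g hg (pushout.inl f.unop g.unop) (pushout.inr f.unop g.unop)
      pushout.condition
    rw [← cancel_mono (E.map (pushout.inr f.unop g.unop))] 
    refine Eq.trans ?_ e
    rw [← hs]
    change (s ≫ E.map g.unop) ≫ _ = _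
    rw [Category.assoc, Category.assoc, ← E.map_comp, ← E.map_comp, pushout.condition]
  · intro t ht
    have e : (show T ⟶ E.obj X.unop from t) ≫ E.map f.unop =
      (show T ⟶ E.obj Y.unop from x f hSf) := ht f hSf
    exact (cancel_mono (E.map f.unop)).1 (e.trans hs.symm)

theorem aux_lex_of_sheaf {A : Type u} [SmallCategory A] [Abelian A]
    {B : Type w} [Category.{v} B] [Abelian B]
    (E : A ⥤ B) (hE : PreservesFiniteProducts E)
    (hS : Presheaf.IsSheaf (singleEpiTopology A) (unopUnop A ⋙ E)) :
    PreservesFiniteLimits E := by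
  haveI : E.Additive := E.additive_of_preserves_binary_products
  have sf : ∀ {X Y : A} (f : X ⟶ Y) [Mono f] (T : B), Presieve.IsSheafFor
      ((unopUnop A ⋙ E) ⋙ coyoneda.obj (op T)) (Presieve.singleton f.op) := by
    intro X Y f hf T
    rw [Presieve.isSheafFor_iff_generate]
    exact hS T _ ⟨_, f.op, hf, Sieve.le_generate _ _ _ (Presieve.singleton_self _)⟩
  have hmono : ∀ {X Y : A} (f : X ⟶ Y) [Mono f], Mono (E.map f) := by
    intro X Y f hf
    constructor
    intro T a b hab
    refine (sf f T).isSeparatedFor.ext ?_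
    rintro Z g ⟨⟩
    exact hab
  have key : ∀ {X Y : A} (g : X ⟶ Y), PreservesLimit (parallelPair g 0) E := by
    intro X Y g
    refine preservesLimit_of_preserves_limit_cone (kernelIsKernel g) ?_
    refine (isLimitMapConeForkEquiv' E (kernel.condition g)).symm ?_
    haveI := hmono (kernel.ι g)
    refine KernelFork.IsLimit.ofι' _ _ (fun {T} t ht => Classical.choice ?_)
    have h1 : t ≫ E.map (cokernel.π (kernel.ι g)) = 0 := by
      haveI := hmono (Abelian.factorThruCoimage g)
      rw [← cancel_mono (E.map (Abelian.factorThruCoimage g)), Category.assoc, zero_comp]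
      erw [← E.map_comp, Abelian.coimage.fac g]
      exact ht
    let x : Presieve.FamilyOfElements ((unopUnop A ⋙ E) ⋙ coyoneda.obj (op T))
      (Presieve.singleton (kernel.ι g).op) :=
        (Presieve.FamilyOfElements.singletonEquiv _ (kernel.ι g).op).symm t
    have hx : x.Compatible := by
      rw [Presieve.FamilyOfElements.compatible_singleton_iff]
      intro Z p q hpq
      have hpq' : kernel.ι g ≫ (p.unop - q.unop) = 0 := by
        rw [Preadditive.comp_sub, sub_eq_zero]
        exact congrArg Quiver.Hom.unop hpq
      simp only [x, Presieve.FamilyOfElements.singletonEquiv_symm_apply_self]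
      change t ≫ E.map p.unop = t ≫ E.map q.unop
      rw [← sub_eq_zero, ← Preadditive.comp_sub, ← E.map_sub,
        ← cokernel.π_desc _ _ hpq', E.map_comp, ← Category.assoc, h1, zero_comp]
    obtain ⟨s, hs, -⟩ := sf (kernel.ι g) T x hx
    rw [Presieve.FamilyOfElements.isAmalgamation_singleton_iff] at hs
    simp only [x, Presieve.FamilyOfElements.singletonEquiv_symm_apply_self] at hs
    exact ⟨⟨s, hs⟩⟩
  exact E.preservesFiniteLimits_of_preservesKernels

theorem stmt_19 {A : Type u} [SmallCategory A] [Abelian A]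
    {B : Type w} [Category.{v} B] [Abelian B] [HasLimitsOfSize.{u, u} B]
    (E : A ⥤ B) (hE : PreservesFiniteProducts E) :
    (Presheaf.IsSheaf (singleEpiTopology A) (unopUnop A ⋙ E) ↔ PreservesFiniteLimits E)
    ∧ {E' : A ⥤ B | PreservesFiniteProducts E' ∧
        Presheaf.IsSheaf (singleEpiTopology A) (unopUnop A ⋙ E')}
      = {E' : A ⥤ B | PreservesFiniteLimits E'} := by
  refine ⟨⟨aux_lex_of_sheaf E hE, aux_sheaf_of_lex E⟩, ?_⟩
  ext E'
  exact ⟨fun h => aux_lex_of_sheaf E' h.1 h.2,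
    fun (h : PreservesFiniteLimits E') => ⟨inferInstance, aux_sheaf_of_lex E' h⟩⟩
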